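/- Let δ>0 with δ≠2 and let s ∈ (0,1). For every C² function h:[0,1]→ℝ with compact support contained in (0,1), ∫₀¹ h''(r) G_δ(s,r) dr = −h(s) + (1/(4(δ−2))) ∫₀¹ h(r) (∫₀^∞ b^{δ−1} (d³/db³)Σ^δ_{r,s}(b) db) dr. In distributional terms, the second r-derivative of G_δ(s,·) on (0,1) equals −δ_s(r) + (1/(4(δ−2))) ∫₀^∞ b^{δ−1}(d³/db³)Σ^δ_{r,s}(b) db, where δ_s is the Dirac measure at s. -/

import Mathlib

open MeasureTheory Real Filter

/-- Ascending Pochhammer symbol `(a)_k = a(a+1)⋯(a+k-1)`. -/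
noncomputable def poch (a : ℝ) (k : ℕ) : ℝ := ∏ i ∈ Finset.range k, (a + i)

/-- Gauss hypergeometric function `₂F₁(a,b,c,z) = ∑ (a)_k (b)_k / (k! (c)_k) z^k`. -/
noncomputable def hyp2F1 (a b c z : ℝ) : ℝ :=
  ∑' k : ℕ, (poch a k * poch b k) / ((Nat.factorial k : ℝ) * poch c k) * z ^ k

/-- `K(δ) = 2 Γ((δ+1)/2)² / Γ(δ/2)²`. -/
noncomputable def Kcoef (δ : ℝ) : ℝ :=
  2 * Real.Gamma ((δ + 1) / 2) ^ 2 / Real.Gamma (δ / 2) ^ 2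

/-- Two-point kernel `G_δ(s,r)`, equal to the second moment `E^δ[X_s X_r]` of a
δ-dimensional Bessel bridge from 0 to 0 over [0,1]. -/
noncomputable def twoPt (δ s r : ℝ) : ℝ :=
  if s < r then
    Kcoef δ * (r - s) ^ (δ / 2 + 1) * (s * (1 - r)) ^ ((1 : ℝ) / 2) *
      (r * (1 - s)) ^ (-((δ + 1) / 2)) *
      hyp2F1 ((δ + 1) / 2) ((δ + 1) / 2) (δ / 2) (s * (1 - r) / (r * (1 - s)))
  else
    Kcoef δ * (s - r) ^ (δ / 2 + 1) * (r * (1 - s)) ^ ((1 : ℝ) / 2) *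
      (s * (1 - r)) ^ (-((δ + 1) / 2)) *
      hyp2F1 ((δ + 1) / 2) ((δ + 1) / 2) (δ / 2) (r * (1 - s) / (s * (1 - r)))

/-- Coefficient `D(s,r)`. -/
noncomputable def Dcoef (s r : ℝ) : ℝ :=
  if s < r then (1 - s) / ((r - s) * (1 - r)) else s / (r * (s - r))

/-- Coefficient `C_k = Γ(k+(δ+1)/2)/(Γ(δ/2) Γ(k+δ/2) k!)`. -/
noncomputable def Ccoef (δ : ℝ) (k : ℕ) : ℝ :=
  Real.Gamma ((k : ℝ) + (δ + 1) / 2) /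
    (Real.Gamma (δ / 2) * Real.Gamma ((k : ℝ) + δ / 2) * (Nat.factorial k : ℝ))

/-- Coefficient `f_k(s,r)`. -/
noncomputable def fcoef (s r : ℝ) (k : ℕ) : ℝ :=
  if s < r then (2 * (r - s)) ^ ((1 : ℝ) / 2 - (k : ℝ)) * (s / r) ^ ((k : ℝ) + 1 / 2)
  else (2 * (s - r)) ^ ((1 : ℝ) / 2 - (k : ℝ)) * ((1 - s) / (1 - r)) ^ ((k : ℝ) + 1 / 2)

/-- `Σ^δ_{r,s}(b) = Σ^δ_r(X_s | b)`, the density-weighted conditional expectation of a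
δ-dimensional Bessel bridge. -/
noncomputable def SigmaRS (δ r s b : ℝ) : ℝ :=
  ((2 : ℝ) ^ (δ / 2 - 1) * (r * (1 - r)) ^ (δ / 2))⁻¹ *
    Real.exp (-(Dcoef s r) * b ^ 2 / 2) *
    ∑' k : ℕ, Ccoef δ k * fcoef s r k * b ^ (2 * k)

/-!
Euler's transformation turns the kernel into a series `K(δ) ∑ t_k g_k(s, r)`, where the `t_k` are
the coefficients of `₂F₁(-1/2, -1/2; δ/2; z)` and `g_k` is the Green kernel of the equation
`y'' = (k² - 1/4) y / (r (1 - r))²`, with derivative jump `-2 k` at `r = s`. Differentiating each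
`g_k` twice produces a Dirac mass of weight `-2 K(δ) ∑ k t_k`, which is `-1` by Gauss' summation
theorem, and a regular part `K(δ) ∑ t_k (k² - 1/4) g_k / (r (1 - r))²`, which is a multiple of
`₂F₁(-1/2, 3/2; δ/2; z)`. On the other side, the integral of `b ^ (δ - 1) d³Σ/db³` is a Mellin
transform of a Gaussian times an entire series; computed termwise, it is a multiple of
`₂F₁((δ+1)/2, (δ-3)/2; δ/2; z)`, and a second Euler transformation identifies the two.
-/

section Pochhammer

lemma poch_zero (a : ℝ) : poch a 0 = 1 := Finset.prod_range_zero _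

lemma poch_succ (a : ℝ) (k : ℕ) : poch a (k + 1) = poch a k * (a + k) :=
  Finset.prod_range_succ _ _

lemma poch_succ_left (a : ℝ) (k : ℕ) : poch a (k + 1) = a * poch (a + 1) k := by
  simp [poch, Finset.prod_range_succ', mul_comm, add_assoc, add_comm (1 : ℝ)]

lemma poch_pos {a : ℝ} (ha : 0 < a) (k : ℕ) : 0 < poch a k :=
  Finset.prod_pos fun i _ => by positivity

lemma poch_eq_eval_ascPochhammer (a : ℝ) (k : ℕ) : poch a k = (ascPochhammer ℝ k).eval a := by
  induction k with
  | zero => simp [poch_zero]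
  | succ k ih => rw [ascPochhammer_succ_eval, poch_succ, ih]

lemma poch_one (k : ℕ) : poch 1 k = k.factorial := by
  rw [poch_eq_eval_ascPochhammer, ascPochhammer_eval_one]

lemma abs_poch_le (a : ℝ) (k : ℕ) : |poch a k| ≤ poch (|a| + 1) k := by
  rw [poch, Finset.abs_prod]
  refine Finset.prod_le_prod (fun _ _ => abs_nonneg _) fun i _ => ?_
  linarith [abs_add_le a i, (Nat.abs_cast i : |(i : ℝ)| = i)]

lemma Gamma_natCast_add {a : ℝ} (ha : 0 < a) (k : ℕ) :
    Gamma (k + a) = Gamma a * poch a k := by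
  induction k with
  | zero => simp [poch_zero]
  | succ k ih =>
    rw [show ((k + 1 : ℕ) : ℝ) + a = (k + a) + 1 by push_cast; ring,
      Gamma_add_one (by positivity), ih, poch_succ]
    ring

lemma poch_mul_add_mul_add_one (a : ℝ) (k : ℕ) :
    poch a k * ((a + k) * (a + 1 + k)) = a * (a + 1) * poch (a + 2) k := by
  have h := poch_succ a (k + 1)
  rw [poch_succ a k, poch_succ_left, poch_succ_left, show a + 1 + 1 = a + 2 by ring] at h
  push_cast at h
  linarith

end Pochhammer

section HypergeometricSeries

/-- The coefficient of `z ^ k` in Gauss' series `₂F₁(a, b; c; z)`. -/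
noncomputable def hypCoeff (a b c : ℝ) (k : ℕ) : ℝ :=
  poch a k * poch b k / (k.factorial * poch c k)

lemma hyp2F1_eq_tsum (a b c z : ℝ) : hyp2F1 a b c z = ∑' k, hypCoeff a b c k * z ^ k := rfl

lemma hypCoeff_zero (a b c : ℝ) : hypCoeff a b c 0 = 1 := by simp [hypCoeff, poch_zero]

lemma hypCoeff_succ (a b : ℝ) {c : ℝ} (hc : 0 < c) (k : ℕ) :
    hypCoeff a b c (k + 1) = hypCoeff a b c k * ((a + k) * (b + k) / ((k + 1) * (c + k))) := by
  have := (poch_pos hc k).ne'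
  simp only [hypCoeff, poch_succ, Nat.factorial_succ]
  push_cast
  field_simp

lemma succ_mul_hypCoeff_succ (a b : ℝ) {c : ℝ} (hc : 0 < c) (k : ℕ) :
    (k + 1) * hypCoeff a b c (k + 1) = a * b / c * hypCoeff (a + 1) (b + 1) (c + 1) k := by
  have := (poch_pos (add_pos hc one_pos) k).ne'
  simp only [hypCoeff, poch_succ_left, Nat.factorial_succ]
  push_cast
  field_simp

lemma summable_norm_hypCoeff_mul_pow (a b : ℝ) {c z : ℝ} (hc : 0 < c) (hz : |z| < 1) :
    Summable fun k => ‖hypCoeff a b c k * z ^ k‖ := by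
  obtain ⟨m, hzm, hm⟩ := exists_between hz
  have ratio_tendsto : Tendsto (fun k : ℕ => |(a + k) / (1 + k) * ((b + k) / (c + k)) * z|)
      atTop (nhds |1 * 1 * z|) := by
    have linear (x y : ℝ) : Tendsto (fun k : ℕ => (x + k) / (y + k)) atTop (nhds 1) := by
      simpa using tendsto_add_mul_div_add_mul_atTop_nhds x y 1 (one_ne_zero (α := ℝ))
    exact (((linear a 1).mul (linear b c)).mul_const z).abs
  refine summable_of_ratio_norm_eventually_le hm ?_
  filter_upwards [ratio_tendsto.eventually_le_const (by simpa using hzm)] with k hk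
  rw [norm_norm, norm_norm, hypCoeff_succ a b hc, pow_succ]
  calc ‖hypCoeff a b c k * ((a + k) * (b + k) / ((k + 1) * (c + k))) * (z ^ k * z)‖
      = |(a + k) / (1 + k) * ((b + k) / (c + k)) * z| * ‖hypCoeff a b c k * z ^ k‖ := by
        rw [← Real.norm_eq_abs, ← norm_mul]
        congr 1
        field_simp
        ring
    _ ≤ m * ‖hypCoeff a b c k * z ^ k‖ := by gcongr

lemma hasSum_poch_div_factorial_mul_pow (a : ℝ) {z : ℝ} (hz : |z| < 1) :
    HasSum (fun k => poch a k / k.factorial * z ^ k) ((1 - z) ^ (-a)) := by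
  have hz' : z ∈ Metric.eball (0 : ℝ) 1 := by simpa [enorm_eq_ofReal_abs] using hz
  have term_eq (k : ℕ) : FormalMultilinearSeries.ofScalars ℝ
      (fun n : ℕ => Ring.choose (a + n - 1) n) k (fun _ => z) = poch a k / k.factorial * z ^ k := by
    have h := Ring.factorial_nsmul_multichoose_eq_ascPochhammer a k
    rw [Polynomial.ascPochhammer_smeval_eq_eval, ← poch_eq_eval_ascPochhammer] at h
    rw [FormalMultilinearSeries.ofScalars_apply_eq, smul_eq_mul, ← Ring.multichoose_eq, ← h,
      nsmul_eq_mul]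
    field_simp
  have value_eq : 1 / (1 - (0 + z)) ^ a = (1 - z) ^ (-a) := by
    rw [zero_add, rpow_neg (by linarith [(abs_lt.1 hz).2]), one_div]
  simpa only [term_eq, value_eq] using
    (one_div_one_sub_rpow_hasFPowerSeriesOnBall_zero a).hasSum hz'

end HypergeometricSeries

section EulerTransformation

open PowerSeries

/-- The hypergeometric differential operator `X(1-X)H'' + (c - (a+b+1)X)H' - abH`, acting on formal
power series. -/
noncomputable def hypOp (a b c : ℝ) (H : ℝ⟦X⟧) : ℝ⟦X⟧ :=
  X * (1 - X) * d⁄dX ℝ (d⁄dX ℝ H) + (C c - C (a + b + 1) * X) * d⁄dX ℝ H - C (a * b) * H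

/-- Gauss' series `₂F₁(a, b; c; X)` as a formal power series. -/
noncomputable def hypSeries (a b c : ℝ) : ℝ⟦X⟧ := mk (hypCoeff a b c)

/-- The expansion of `(1 - X) ^ (-a)` as a formal power series. -/
noncomputable def oneSubPowSeries (a : ℝ) : ℝ⟦X⟧ := mk fun k => poch a k / k.factorial

lemma coeff_hypOp (a b c : ℝ) (H : ℝ⟦X⟧) (n : ℕ) :
    coeff n (hypOp a b c H)
      = (n + 1) * (c + n) * coeff (n + 1) H - (a + n) * (b + n) * coeff n H := by
  have expand : hypOp a b c H = X * d⁄dX ℝ (d⁄dX ℝ H) - X * (X * d⁄dX ℝ (d⁄dX ℝ H))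
      + C c * d⁄dX ℝ H - C (a + b + 1) * (X * d⁄dX ℝ H) - C (a * b) * H := by
    rw [hypOp]; ring
  rw [expand, map_sub, map_sub, map_add, map_sub, coeff_C_mul, coeff_C_mul, coeff_C_mul]
  rcases n with _ | _ | n <;> simp [coeff_succ_X_mul, coeff_derivative] <;> ring

lemma eq_hypSeries_of_hypOp_eq_zero {a b c : ℝ} (hc : 0 < c) {H : ℝ⟦X⟧} (hH : hypOp a b c H = 0)
    (hH0 : coeff 0 H = 1) : H = hypSeries a b c := by
  ext n
  induction n with
  | zero => rw [hH0, hypSeries, coeff_mk, hypCoeff_zero]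
  | succ n ih =>
    have recurrence : (n + 1) * (c + n) * coeff (n + 1) H = (a + n) * (b + n) * coeff n H := by
      simpa only [coeff_hypOp, map_zero, sub_eq_zero] using congrArg (coeff n) hH
    rw [hypSeries, coeff_mk] at ih ⊢
    rw [hypCoeff_succ a b hc, ← ih]
    field_simp
    linarith

lemma hypOp_hypSeries (a b : ℝ) {c : ℝ} (hc : 0 < c) : hypOp a b c (hypSeries a b c) = 0 := by
  ext n
  rw [coeff_hypOp, hypSeries, coeff_mk, coeff_mk, hypCoeff_succ a b hc, map_zero]
  field_simp
  ring

lemma one_sub_X_mul_derivative_oneSubPowSeries (a : ℝ) :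
    (1 - X) * d⁄dX ℝ (oneSubPowSeries a) = C a * oneSubPowSeries a := by
  ext n
  rw [sub_mul, one_mul, map_sub, coeff_C_mul, coeff_derivative]
  rcases n with _ | n
  · simp [oneSubPowSeries, poch_succ, poch_zero]
  · rw [coeff_succ_X_mul, coeff_derivative]
    simp only [oneSubPowSeries, coeff_mk, poch_succ, Nat.factorial_succ]
    push_cast
    field_simp
    ring

lemma one_sub_X_mul_derivative_derivative_oneSubPowSeries (a : ℝ) :
    (1 - X) * d⁄dX ℝ (d⁄dX ℝ (oneSubPowSeries a))
      = (C a + 1) * d⁄dX ℝ (oneSubPowSeries a) := by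
  have h := congrArg (d⁄dX ℝ) (one_sub_X_mul_derivative_oneSubPowSeries a)
  simp only [Derivation.leibniz, map_sub, Derivation.map_one_eq_zero, derivative_X, derivative_C,
    smul_eq_mul] at h
  linear_combination h

lemma hypOp_oneSubPowSeries_mul {a b c : ℝ} {F : ℝ⟦X⟧} (hF : hypOp (c - a) (c - b) c F = 0) :
    hypOp a b c (oneSubPowSeries (a + b - c) * F) = 0 := by
  have hP := one_sub_X_mul_derivative_oneSubPowSeries (a + b - c)
  have hP' := one_sub_X_mul_derivative_derivative_oneSubPowSeries (a + b - c)
  have one_sub_X_ne_zero : (1 - X : ℝ⟦X⟧) ≠ 0 := fun h => by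
    simpa using congrArg (coeff 0) h
  refine (mul_eq_zero.1 ?_).resolve_left one_sub_X_ne_zero
  set P := oneSubPowSeries (a + b - c)
  simp only [hypOp, Derivation.leibniz, map_add, smul_eq_mul, map_sub, map_mul, map_one]
    at hP hP' hF ⊢
  linear_combination (P * (1 - X)) * hF + (X * (1 - X) * F) * hP'
    + (2 * X * (1 - X) * d⁄dX ℝ F + (C c - (C a + C b + 1) * X) * F
      + X * F * (1 - (C c - C a - C b))) * hP

lemma oneSubPowSeries_mul_hypSeries (a b : ℝ) {c : ℝ} (hc : 0 < c) :
    oneSubPowSeries (a + b - c) * hypSeries (c - a) (c - b) c = hypSeries a b c :=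
  eq_hypSeries_of_hypOp_eq_zero hc (hypOp_oneSubPowSeries_mul (hypOp_hypSeries _ _ hc))
    (by simp [coeff_mul, oneSubPowSeries, hypSeries, hypCoeff_zero, poch_zero])

theorem hyp2F1_eq_rpow_mul_hyp2F1 (a b : ℝ) {c z : ℝ} (hc : 0 < c) (hz : |z| < 1) :
    hyp2F1 a b c z = (1 - z) ^ (c - a - b) * hyp2F1 (c - a) (c - b) c z := by
  have summable_binomial : Summable fun k => ‖poch (a + b - c) k / k.factorial * z ^ k‖ := by
    refine (summable_norm_hypCoeff_mul_pow (a + b - c) c hc hz).congr fun k => ?_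
    rw [hypCoeff, mul_div_mul_right _ _ (poch_pos hc k).ne']
  have binomial := hasSum_poch_div_factorial_mul_pow (a + b - c) hz
  rw [show c - a - b = -(a + b - c) by ring, ← binomial.tsum_eq, hyp2F1_eq_tsum, hyp2F1_eq_tsum,
    tsum_mul_tsum_eq_tsum_sum_antidiagonal_of_summable_norm summable_binomial
      (summable_norm_hypCoeff_mul_pow _ _ hc hz)]
  refine tsum_congr fun n => ?_
  have cauchy := congrArg (coeff n) (oneSubPowSeries_mul_hypSeries a b hc)
  simp only [coeff_mul, oneSubPowSeries, hypSeries, coeff_mk] at cauchy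
  rw [← cauchy, Finset.sum_mul]
  refine Finset.sum_congr rfl fun p hp => ?_
  rw [← Finset.HasAntidiagonal.mem_antidiagonal.1 hp, pow_add]
  ring

end EulerTransformation

section GaussSummation

open ProbabilityTheory (beta beta_pos)

lemma lintegral_rpow_mul_one_sub_rpow {α β : ℝ} (hα : 0 < α) (hβ : 0 < β) :
    ∫⁻ t in Set.Ioo (0 : ℝ) 1, ENNReal.ofReal (t ^ (α - 1) * (1 - t) ^ (β - 1))
      = ENNReal.ofReal (beta α β) := by
  have beta_pos := beta_pos hα hβ
  have h := ProbabilityTheory.lintegral_betaPDF_eq_one hα hβ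
  simp only [ProbabilityTheory.lintegral_betaPDF, mul_assoc,
    ENNReal.ofReal_mul (one_div_pos.2 beta_pos).le] at h
  rw [lintegral_const_mul' _ _ ENNReal.ofReal_ne_top, one_div, ENNReal.ofReal_inv_of_pos beta_pos,
    mul_comm, ← div_eq_mul_inv, ENNReal.div_eq_one_iff (by simpa using beta_pos)
      ENNReal.ofReal_ne_top] at h
  exact h

lemma poch_div_factorial_mul_beta {a b c : ℝ} (hb : 0 < b) (hbc : b < c) (k : ℕ) :
    poch a k / k.factorial * beta (k + b) (c - b) = beta b (c - b) * hypCoeff a b c k := by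
  have hc : 0 < c := hb.trans hbc
  have := (poch_pos hc k).ne'
  have := (Gamma_pos_of_pos hc).ne'
  rw [beta, beta, show k + b + (c - b) = k + c by ring, add_sub_cancel, Gamma_natCast_add hb,
    Gamma_natCast_add hc, hypCoeff]
  field_simp

lemma tsum_poch_mul_rpow {a b c t : ℝ} (ha : 0 < a) (ht : t ∈ Set.Ioo (0 : ℝ) 1) :
    ∑' k : ℕ, ENNReal.ofReal
        (poch a k / k.factorial * (t ^ (k + b - 1) * (1 - t) ^ (c - b - 1)))
      = ENNReal.ofReal (t ^ (b - 1) * (1 - t) ^ (c - a - b - 1)) := by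
  have ht1 : 0 < 1 - t := by linarith [ht.2]
  have series := (hasSum_poch_div_factorial_mul_pow a
    (by rw [abs_of_pos ht.1]; exact ht.2)).mul_left (t ^ (b - 1) * (1 - t) ^ (c - b - 1))
  have value_eq : t ^ (b - 1) * (1 - t) ^ (c - a - b - 1)
      = t ^ (b - 1) * (1 - t) ^ (c - b - 1) * (1 - t) ^ (-a) := by
    rw [mul_assoc, ← rpow_add ht1]
    ring_nf
  rw [value_eq, ← series.tsum_eq, ENNReal.ofReal_tsum_of_nonneg _ series.summable]
  · refine tsum_congr fun k => congrArg _ ?_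
    rw [show (k : ℝ) + b - 1 = b - 1 + k by ring, rpow_add ht.1, rpow_natCast]
    ring
  · intro k
    have := (poch_pos ha k).le
    have := ht.1.le
    positivity

theorem hasSum_hypCoeff {a b c : ℝ} (ha : 0 < a) (hb : 0 < b) (hc : a + b < c) :
    HasSum (hypCoeff a b c)
      (Gamma c * Gamma (c - a - b) / (Gamma (c - a) * Gamma (c - b))) := by
  have hbc : 0 < c - b := by linarith
  have term_nonneg (k : ℕ) : 0 ≤ poch a k / k.factorial :=
    div_nonneg (poch_pos ha k).le (Nat.cast_nonneg _)
  have hyp_nonneg (k : ℕ) : 0 ≤ beta b (c - b) * hypCoeff a b c k := by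
    rw [← poch_div_factorial_mul_beta hb (by linarith)]
    exact mul_nonneg (term_nonneg k) (beta_pos (by positivity) hbc).le
  have euler_integral : ∑' k, ENNReal.ofReal (beta b (c - b) * hypCoeff a b c k)
      = ENNReal.ofReal (beta b (c - a - b)) := by
    calc ∑' k, ENNReal.ofReal (beta b (c - b) * hypCoeff a b c k)
        = ∑' k : ℕ, ∫⁻ t in Set.Ioo (0 : ℝ) 1, ENNReal.ofReal
            (poch a k / k.factorial * (t ^ (k + b - 1) * (1 - t) ^ (c - b - 1))) := by
          refine tsum_congr fun k => ?_
          simp only [ENNReal.ofReal_mul (term_nonneg k)]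
          rw [lintegral_const_mul' _ _ ENNReal.ofReal_ne_top,
            lintegral_rpow_mul_one_sub_rpow (by positivity) hbc, ← ENNReal.ofReal_mul
              (term_nonneg k), poch_div_factorial_mul_beta hb (by linarith)]
      _ = ∫⁻ t in Set.Ioo (0 : ℝ) 1, ENNReal.ofReal
            (t ^ (b - 1) * (1 - t) ^ (c - a - b - 1)) := by
          rw [← lintegral_tsum fun k => by fun_prop]
          exact setLIntegral_congr_fun measurableSet_Ioo fun t ht => tsum_poch_mul_rpow ha ht
      _ = ENNReal.ofReal (beta b (c - a - b)) :=
          lintegral_rpow_mul_one_sub_rpow hb (by linarith)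
  have scaled_sum := ENNReal.hasSum_toReal (euler_integral.trans_ne ENNReal.ofReal_ne_top)
  rw [← ENNReal.tsum_toReal_eq fun _ => ENNReal.ofReal_ne_top, euler_integral,
    ENNReal.toReal_ofReal (beta_pos hb (by linarith)).le] at scaled_sum
  simp only [ENNReal.toReal_ofReal (hyp_nonneg _)] at scaled_sum
  have value_eq : beta b (c - b) * (Gamma c * Gamma (c - a - b) / (Gamma (c - a) * Gamma (c - b)))
      = beta b (c - a - b) := by
    have := (Gamma_pos_of_pos hbc).ne'
    have := (Gamma_pos_of_pos (show 0 < c by linarith)).ne'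
    simp only [beta, add_sub_cancel, show b + (c - a - b) = c - a by ring]
    field_simp
  rwa [← hasSum_mul_left_iff (beta_pos hb hbc).ne', value_eq]

theorem hasSum_natCast_mul_hypCoeff {a b c : ℝ} (ha : -1 < a) (hb : -1 < b) (hc : 0 < c)
    (habc : a + b + 1 < c) :
    HasSum (fun k : ℕ => k * hypCoeff a b c k)
      (a * b * (Gamma c * Gamma (c - a - b - 1)) / (Gamma (c - a) * Gamma (c - b))) := by
  have shifted := (hasSum_hypCoeff (a := a + 1) (b := b + 1) (c := c + 1) (by linarith)
    (by linarith) (by linarith)).mul_left (a * b / c)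
  have value_eq : a * b / c * (Gamma (c + 1) * Gamma (c + 1 - (a + 1) - (b + 1)) /
        (Gamma (c + 1 - (a + 1)) * Gamma (c + 1 - (b + 1))))
      = a * b * (Gamma c * Gamma (c - a - b - 1)) / (Gamma (c - a) * Gamma (c - b)) := by
    rw [Gamma_add_one hc.ne', add_sub_add_right_eq_sub, add_sub_add_right_eq_sub,
      show c - a - (b + 1) = c - a - b - 1 by ring]
    field_simp
  simp only [← succ_mul_hypCoeff_succ a b hc, value_eq] at shifted
  rw [← hasSum_nat_add_iff' 1]
  simpa using shifted

end GaussSummation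

section EntireSeries

lemma summable_norm_succ_mul_pow {c : ℕ → ℝ} (hc : ∀ R : ℝ, Summable fun k => ‖c k * R ^ k‖)
    (R : ℝ) : Summable fun k : ℕ => ‖(k + 1) * c (k + 1) * R ^ k‖ := by
  refine Summable.of_nonneg_of_le (fun k => norm_nonneg _) (fun k => ?_)
    ((summable_nat_add_iff 1).2 (hc (2 * (|R| + 1))))
  have succ_le : (k : ℝ) + 1 ≤ 2 ^ (k + 1) := by exact_mod_cast Nat.lt_two_pow_self.le
  have pow_le : |R| ^ k ≤ (|R| + 1) ^ (k + 1) :=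
    (pow_le_pow_left₀ (abs_nonneg R) (by linarith) k).trans
      (pow_le_pow_right₀ (by linarith [abs_nonneg R]) k.le_succ)
  simp only [norm_mul, norm_pow, norm_eq_abs]
  rw [abs_of_nonneg (by positivity : (0 : ℝ) ≤ k + 1), abs_two,
    abs_of_nonneg (by positivity : 0 ≤ |R| + 1), mul_pow]
  calc (k + 1) * |c (k + 1)| * |R| ^ k = |c (k + 1)| * ((k + 1) * |R| ^ k) := by ring
    _ ≤ |c (k + 1)| * (2 ^ (k + 1) * (|R| + 1) ^ (k + 1)) := by gcongr

lemma hasDerivAt_tsum_mul_pow {c : ℕ → ℝ} (hc : ∀ R : ℝ, Summable fun k => ‖c k * R ^ k‖)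
    (t : ℝ) :
    HasDerivAt (fun t => ∑' k, c k * t ^ k) (∑' k : ℕ, (k + 1) * c (k + 1) * t ^ k) t := by
  set R := |t| + 1
  have hR : 0 < R := by positivity
  have termwise := hasDerivAt_tsum_of_isPreconnected (t := Metric.ball (0 : ℝ) R) (y₀ := 0) (y := t)
    (u := fun k : ℕ => ‖c k * (k * R ^ (k - 1))‖)
    (g := fun k t => c k * t ^ k) (g' := fun k t => c k * (k * t ^ (k - 1)))
    ?_ Metric.isOpen_ball (convex_ball _ _).isPreconnected
    (fun k y _ => (hasDerivAt_pow k y).const_mul (c k)) (fun k y hy => ?_)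
    (Metric.mem_ball_self hR) (hc 0).of_norm (by simp [R])
  · refine termwise.congr_deriv ?_
    have summable_deriv : Summable fun k : ℕ => c k * (k * t ^ (k - 1)) := by
      refine (summable_nat_add_iff 1).1 ((summable_norm_succ_mul_pow hc t).of_norm.congr ?_)
      intro k
      simp only [Nat.cast_add_one, Nat.add_sub_cancel]
      ring
    rw [summable_deriv.tsum_eq_zero_add, Nat.cast_zero, zero_mul, mul_zero, zero_add]
    refine tsum_congr fun k => ?_
    simp only [Nat.cast_add_one, Nat.add_sub_cancel]
    ring
  · refine (summable_nat_add_iff 1).1 ((summable_norm_succ_mul_pow hc R).congr fun k => ?_)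
    simp only [Nat.cast_add_one, Nat.add_sub_cancel]
    ring_nf
  · have : ‖y‖ ≤ ‖R‖ := by
      rw [mem_ball_zero_iff] at hy
      exact hy.le.trans (le_abs_self R)
    simp only [norm_mul, norm_pow]
    gcongr

end EntireSeries

section ExpMulSeries

/-- The function `t ↦ exp (-q t) ∑ c_k t ^ k`. -/
noncomputable def expMulSeries (q : ℝ) (c : ℕ → ℝ) (t : ℝ) : ℝ :=
  exp (-q * t) * ∑' k, c k * t ^ k

/-- The coefficients `d` for which `expMulSeries q d` is the derivative of `expMulSeries q c`. -/
def expMulSeriesDeriv (q : ℝ) (c : ℕ → ℝ) (k : ℕ) : ℝ := (k + 1) * c (k + 1) - q * c k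

/-- The series `∑ c_k (β)_k / q ^ k`, which for `β > 0` is the Mellin transform of
`expMulSeries q c` at `β` up to the factor `Γ(β) q ^ (-β)`; it makes sense for every real `β`. -/
noncomputable def mellinSeries (q : ℝ) (c : ℕ → ℝ) (β : ℝ) : ℝ := ∑' k, c k * poch β k / q ^ k

/-- Absolute convergence of `mellinSeries q c` on the positive half-line; this is what integrating
`expMulSeries q c` term by term against powers requires. -/
def MellinSummable (q : ℝ) (c : ℕ → ℝ) : Prop :=
  ∀ α, 0 < α → Summable fun k => ‖c k‖ * poch α k / q ^ k

variable {q : ℝ} {c : ℕ → ℝ}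

lemma MellinSummable.summable (hq : 0 < q) (hc : MellinSummable q c) (β : ℝ) :
    Summable fun k => c k * poch β k / q ^ k := by
  refine .of_norm_bounded (hc (|β| + 1) (by positivity)) fun k => ?_
  rw [norm_div, norm_mul, norm_pow, norm_of_nonneg hq.le]
  gcongr
  exact abs_poch_le β k

lemma MellinSummable.summable_norm_mul_pow (hq : 0 < q) (hc : MellinSummable q c) (R : ℝ) :
    Summable fun k => ‖c k * R ^ k‖ := by
  refine .of_nonneg_of_le (fun _ => norm_nonneg _) (fun k => ?_)
    ((hc 1 one_pos).mul_left (exp (q * |R|)))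
  have exp_bound := pow_div_factorial_le_exp (q * |R|) (by positivity) k
  calc ‖c k * R ^ k‖ = (q * |R|) ^ k / k.factorial * (‖c k‖ * poch 1 k / q ^ k) := by
        rw [norm_mul, norm_pow, norm_eq_abs R, poch_one, mul_pow]
        field_simp
    _ ≤ exp (q * |R|) * (‖c k‖ * poch 1 k / q ^ k) := by
        have := (poch_pos one_pos k).le
        gcongr

lemma mellinSummable_expMulSeriesDeriv (hq : 0 < q) (hc : MellinSummable q c) :
    MellinSummable q (expMulSeriesDeriv q c) := by
  intro α hα
  have shifted := (summable_nat_add_iff 1).2 (hc (α + 1) (by positivity))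
  have poch_nonneg (k : ℕ) := (poch_pos hα k).le
  refine .of_nonneg_of_le (fun k => ?_) (fun k => ?_)
    ((shifted.mul_left q).add ((hc α hα).mul_left q))
  · have := poch_nonneg k
    positivity
  · have succ_mul_le : (k + 1) * poch α k ≤ poch (α + 1) (k + 1) := by
      rw [poch_succ, mul_comm]
      gcongr ?_ * ?_
      · exact (poch_pos (by positivity) k).le
      · exact Finset.prod_le_prod (fun i _ => by positivity) fun i _ => by linarith
      · linarith
    have norm_le : ‖expMulSeriesDeriv q c k‖ ≤ (k + 1) * ‖c (k + 1)‖ + q * ‖c k‖ := by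
      refine (norm_sub_le _ _).trans_eq ?_
      rw [norm_mul, norm_mul, norm_of_nonneg hq.le, norm_of_nonneg (by positivity)]
    calc ‖expMulSeriesDeriv q c k‖ * poch α k / q ^ k
        ≤ ((k + 1) * ‖c (k + 1)‖ + q * ‖c k‖) * poch α k / q ^ k := by
          have := poch_nonneg k
          gcongr
      _ = q * (‖c (k + 1)‖ * ((k + 1) * poch α k) / q ^ (k + 1))
          + q * (‖c k‖ * poch α k / q ^ k) := by
          rw [pow_succ]
          field_simp
      _ ≤ q * (‖c (k + 1)‖ * poch (α + 1) (k + 1) / q ^ (k + 1))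
          + q * (‖c k‖ * poch α k / q ^ k) := by
          gcongr

lemma MellinSummable.hasDerivAt_expMulSeries (hq : 0 < q) (hc : MellinSummable q c) (t : ℝ) :
    HasDerivAt (expMulSeries q c) (expMulSeries q (expMulSeriesDeriv q c) t) t := by
  have entire := hc.summable_norm_mul_pow hq
  have series_eq : ∑' k, expMulSeriesDeriv q c k * t ^ k
      = ∑' k : ℕ, (k + 1) * c (k + 1) * t ^ k - q * ∑' k, c k * t ^ k := by
    rw [← tsum_mul_left, ← (summable_norm_succ_mul_pow entire t).of_norm.tsum_sub
      ((entire t).of_norm.mul_left q)]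
    refine tsum_congr fun k => ?_
    rw [expMulSeriesDeriv]
    ring
  have exp_deriv := ((hasDerivAt_id t).const_mul (-q)).exp
  refine (exp_deriv.mul (hasDerivAt_tsum_mul_pow entire t)).congr_deriv ?_
  rw [expMulSeries, series_eq, id, mul_one]
  ring

/-- The series form of the integration by parts `∫ t ^ β f'(t) dt = -β ∫ t ^ (β - 1) f(t) dt`,
continued to the values of `β` for which the integrals diverge. -/
lemma mellinSeries_expMulSeriesDeriv (hq : 0 < q) (hc : MellinSummable q c) (β : ℝ) :
    mellinSeries q (expMulSeriesDeriv q c) (β + 1) = -q * mellinSeries q c β := by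
  have term_eq (k : ℕ) : expMulSeriesDeriv q c k * poch (β + 1) k / q ^ k
      = q * (c (k + 1) * poch (β + 1) (k + 1) / q ^ (k + 1)
          - c (k + 1) * poch β (k + 1) / q ^ (k + 1))
        - q * (c k * poch (β + 1) k / q ^ k) := by
    rw [expMulSeriesDeriv, poch_succ, poch_succ_left, pow_succ]
    field_simp
    ring
  have upper := (hc.summable hq (β + 1)).hasSum
  have shifted := (hasSum_nat_add_iff' 1).2 (upper.sub (hc.summable hq β).hasSum)
  simp only [Finset.range_one, Finset.sum_singleton, poch_zero, sub_self, sub_zero] at shifted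
  simp only [mellinSeries, term_eq]
  rw [((shifted.mul_left q).sub (upper.mul_left q)).tsum_eq]
  ring

end ExpMulSeries

section GaussianMoments

lemma integrable_tsum_of_summable_integral_norm {X : Type*} [MeasurableSpace X] {μ : Measure X}
    {F : ℕ → X → ℝ} (hF : ∀ i, Integrable (F i) μ) (hF' : Summable fun i => ∫ x, ‖F i x‖ ∂μ) :
    Integrable (fun x => ∑' i, F i x) μ := by
  refine ⟨(AEMeasurable.tsum fun i => (hF i).1.aemeasurable).aestronglyMeasurable, ?_⟩
  calc ∫⁻ x, ‖∑' i, F i x‖ₑ ∂μ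
      ≤ ∫⁻ x, ∑' i, ‖F i x‖ₑ ∂μ := lintegral_mono fun _ => enorm_tsum_le_tsum_enorm
    _ = ∑' i, ∫⁻ x, ‖F i x‖ₑ ∂μ := lintegral_tsum fun i => (hF i).1.enorm
    _ = ∑' i, ENNReal.ofReal (∫ x, ‖F i x‖ ∂μ) :=
        tsum_congr fun i => (ofReal_integral_norm_eq_lintegral_enorm (hF i)).symm
    _ = ENNReal.ofReal (∑' i, ∫ x, ‖F i x‖ ∂μ) :=
        (ENNReal.ofReal_tsum_of_nonneg (fun _ => integral_nonneg fun _ => norm_nonneg _) hF').symm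
    _ < ⊤ := ENNReal.ofReal_lt_top

variable {q a : ℝ} {c : ℕ → ℝ}

lemma integral_rpow_mul_exp_neg_mul_sq (hq : 0 < q) (ha : 0 < a) (k : ℕ) :
    ∫ b in Set.Ioi (0 : ℝ), b ^ (2 * a - 1 + 2 * k) * exp (-q * b ^ 2)
      = 1 / 2 * Gamma a * q ^ (-a) * (poch a k / q ^ k) := by
  have h := integral_rpow_mul_exp_neg_mul_rpow (p := 2) (q := 2 * a - 1 + 2 * k) two_pos
    (by linarith [(Nat.cast_nonneg k : (0 : ℝ) ≤ k)]) hq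
  simp only [rpow_two] at h
  rw [h, show (2 * a - 1 + 2 * k + 1) / 2 = (k : ℝ) + a by ring, Gamma_natCast_add ha,
    show -(2 * a - 1 + 2 * k + 1) / 2 = -a - (k : ℝ) by ring, rpow_sub hq, rpow_natCast]
  ring

lemma rpow_mul_expMulSeries_sq {b : ℝ} (hb : 0 < b) :
    b ^ (2 * a - 1) * expMulSeries q c (b ^ 2)
      = ∑' k : ℕ, c k * (b ^ (2 * a - 1 + 2 * k) * exp (-q * b ^ 2)) := by
  rw [expMulSeries, ← mul_assoc, ← tsum_mul_left]
  refine tsum_congr fun k => ?_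
  rw [rpow_add hb, ← Nat.cast_ofNat, ← Nat.cast_mul, rpow_natCast, pow_mul]
  ring

lemma MellinSummable.integrableOn_and_integral_expMulSeries_sq (hq : 0 < q) (ha : 0 < a)
    (hc : MellinSummable q c) :
    IntegrableOn (fun b => b ^ (2 * a - 1) * expMulSeries q c (b ^ 2)) (Set.Ioi 0) ∧
    ∫ b in Set.Ioi (0 : ℝ), b ^ (2 * a - 1) * expMulSeries q c (b ^ 2)
      = 1 / 2 * Gamma a * q ^ (-a) * mellinSeries q c a := by
  let F (k : ℕ) (b : ℝ) : ℝ := c k * (b ^ (2 * a - 1 + 2 * k) * exp (-q * b ^ 2))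
  have integrable_F (k : ℕ) : IntegrableOn (F k) (Set.Ioi 0) :=
    (integrableOn_rpow_mul_exp_neg_mul_sq hq
      (by linarith [(Nat.cast_nonneg k : (0 : ℝ) ≤ k)])).const_mul _
  have integral_norm_F (k : ℕ) : ∫ b in Set.Ioi (0 : ℝ), ‖F k b‖
      = 1 / 2 * Gamma a * q ^ (-a) * (‖c k‖ * poch a k / q ^ k) := by
    have norm_F : Set.EqOn (fun b => ‖F k b‖)
        (fun b => ‖c k‖ * (b ^ (2 * a - 1 + 2 * k) * exp (-q * b ^ 2))) (Set.Ioi 0) := by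
      intro b hb
      have hb : 0 < b := hb
      simp only [F]
      rw [norm_mul, norm_of_nonneg (by positivity : 0 ≤ b ^ (2 * a - 1 + 2 * k) * _)]
    rw [setIntegral_congr_fun measurableSet_Ioi norm_F, integral_const_mul,
      integral_rpow_mul_exp_neg_mul_sq hq ha]
    ring
  have summable_F : Summable fun k => ∫ b in Set.Ioi (0 : ℝ), ‖F k b‖ := by
    simpa only [integral_norm_F] using (hc a ha).mul_left _
  have tsum_F : Set.EqOn (fun b => b ^ (2 * a - 1) * expMulSeries q c (b ^ 2))
      (fun b => ∑' k, F k b) (Set.Ioi 0) := fun b hb => rpow_mul_expMulSeries_sq hb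
  constructor
  · exact IntegrableOn.congr_fun
      (integrable_tsum_of_summable_integral_norm integrable_F summable_F)
      tsum_F.symm measurableSet_Ioi
  · rw [setIntegral_congr_fun measurableSet_Ioi tsum_F,
      ← (hasSum_integral_of_summable_integral_norm integrable_F summable_F).tsum_eq, mellinSeries,
      ← tsum_mul_left]
    refine tsum_congr fun k => ?_
    rw [integral_const_mul, integral_rpow_mul_exp_neg_mul_sq hq ha]
    ring

lemma iterate_three_deriv_comp_sq {f f₁ f₂ f₃ : ℝ → ℝ} (hf : ∀ t, HasDerivAt f (f₁ t) t)
    (hf₁ : ∀ t, HasDerivAt f₁ (f₂ t) t) (hf₂ : ∀ t, HasDerivAt f₂ (f₃ t) t) :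
    deriv^[3] (fun b => f (b ^ 2)) = fun b => 12 * b * f₂ (b ^ 2) + 8 * b ^ 3 * f₃ (b ^ 2) := by
  have comp_sq {g g' : ℝ → ℝ} (hg : ∀ t, HasDerivAt g (g' t) t) (b : ℝ) :
      HasDerivAt (fun b => g (b ^ 2)) (g' (b ^ 2) * (2 * b)) b :=
    (hg (b ^ 2)).comp b (by simpa using hasDerivAt_pow 2 b)
  have first : deriv (fun b => f (b ^ 2)) = fun b => f₁ (b ^ 2) * (2 * b) :=
    funext fun b => (comp_sq hf b).deriv
  have second : deriv (fun b => f₁ (b ^ 2) * (2 * b))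
      = fun b => f₂ (b ^ 2) * (4 * b ^ 2) + 2 * f₁ (b ^ 2) := by
    funext b
    refine ((comp_sq hf₁ b).fun_mul ((hasDerivAt_id b).const_mul 2)).deriv.trans ?_
    simp only [id]
    ring
  have third : deriv (fun b => f₂ (b ^ 2) * (4 * b ^ 2) + 2 * f₁ (b ^ 2))
      = fun b => 12 * b * f₂ (b ^ 2) + 8 * b ^ 3 * f₃ (b ^ 2) := by
    funext b
    refine (((comp_sq hf₂ b).fun_mul ((hasDerivAt_pow 2 b).const_mul 4)).fun_add
      ((comp_sq hf₁ b).const_mul 2)).deriv.trans ?_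
    simp only [Nat.cast_ofNat]
    ring
  simp only [Function.iterate_succ, Function.iterate_zero, Function.comp, id, first, second, third]

theorem MellinSummable.integral_iterate_three_deriv_expMulSeries_sq (hq : 0 < q) (ha : 0 < a)
    (hc : MellinSummable q c) :
    ∫ b in Set.Ioi (0 : ℝ), b ^ (2 * a - 2) * deriv^[3] (fun b => expMulSeries q c (b ^ 2)) b
      = (6 - 4 * a) * Gamma a * q ^ (2 - a) * mellinSeries q c (a - 2) := by
  have hc₁ := mellinSummable_expMulSeriesDeriv hq hc
  have hc₂ := mellinSummable_expMulSeriesDeriv hq hc₁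
  have hc₃ := mellinSummable_expMulSeriesDeriv hq hc₂
  set c₂ := expMulSeriesDeriv q (expMulSeriesDeriv q c)
  set c₃ := expMulSeriesDeriv q c₂
  obtain ⟨int₂, val₂⟩ := hc₂.integrableOn_and_integral_expMulSeries_sq hq ha
  obtain ⟨int₃, val₃⟩ := hc₃.integrableOn_and_integral_expMulSeries_sq (a := a + 1) hq (by linarith)
  have integrand_eq : Set.EqOn
      (fun b => b ^ (2 * a - 2) * deriv^[3] (fun b => expMulSeries q c (b ^ 2)) b)
      (fun b => 12 * (b ^ (2 * a - 1) * expMulSeries q c₂ (b ^ 2))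
        + 8 * (b ^ (2 * (a + 1) - 1) * expMulSeries q c₃ (b ^ 2))) (Set.Ioi 0) := by
    intro b hb
    have hb : b ≠ 0 := (Set.mem_Ioi.1 hb).ne'
    simp only [iterate_three_deriv_comp_sq (hc.hasDerivAt_expMulSeries hq)
      (hc₁.hasDerivAt_expMulSeries hq) (hc₂.hasDerivAt_expMulSeries hq)]
    rw [show 2 * a - 1 = 2 * a - 2 + 1 by ring, rpow_add_one hb,
      show 2 * (a + 1) - 1 = 2 * a - 2 + (3 : ℕ) by push_cast; ring, rpow_add_natCast hb]
    ring
  have mellin₂ : mellinSeries q c₂ a = q ^ 2 * mellinSeries q c (a - 2) := by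
    have h₂ := mellinSeries_expMulSeriesDeriv hq hc₁ (a - 1)
    have h₁ := mellinSeries_expMulSeriesDeriv hq hc (a - 2)
    rw [sub_add_cancel] at h₂
    rw [show a - 2 + 1 = a - 1 by ring] at h₁
    rw [h₂, h₁]
    ring
  rw [setIntegral_congr_fun measurableSet_Ioi integrand_eq,
    integral_add (int₂.const_mul _) (int₃.const_mul _), integral_const_mul, integral_const_mul,
    val₂, val₃, mellinSeries_expMulSeriesDeriv hq hc₂, mellin₂, Gamma_add_one ha.ne',
    show -(a + 1) = -a - 1 by ring, rpow_sub_one hq.ne',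
    show 2 - a = -a + (2 : ℕ) by push_cast; ring, rpow_add_natCast hq.ne']
  field_simp
  ring

end GaussianMoments

section BesselCoefficients

lemma Ccoef_eq {δ : ℝ} (hδ : 0 < δ) (k : ℕ) :
    Ccoef δ k = Gamma ((δ + 1) / 2) / Gamma (δ / 2) ^ 2 *
      (poch ((δ + 1) / 2) k / (k.factorial * poch (δ / 2) k)) := by
  have := (poch_pos (half_pos hδ) k).ne'
  rw [Ccoef, Gamma_natCast_add (by linarith), Gamma_natCast_add (by linarith)]
  field_simp

lemma Ccoef_mul_pow_mul_poch {δ : ℝ} (hδ : 0 < δ) (q E β : ℝ) (k : ℕ) :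
    Ccoef δ k * E ^ k * poch β k / q ^ k = Gamma ((δ + 1) / 2) / Gamma (δ / 2) ^ 2 *
      (hypCoeff ((δ + 1) / 2) β (δ / 2) k * (E / q) ^ k) := by
  rw [Ccoef_eq hδ, hypCoeff, div_pow]
  ring

lemma mellinSummable_Ccoef_mul_pow {δ q E : ℝ} (hδ : 0 < δ) (hq : 0 < q) (hE : |E / q| < 1) :
    MellinSummable q fun k => Ccoef δ k * E ^ k := by
  intro α hα
  refine ((summable_norm_hypCoeff_mul_pow ((δ + 1) / 2) α (half_pos hδ) hE).mul_left
    ‖Gamma ((δ + 1) / 2) / Gamma (δ / 2) ^ 2‖).congr fun k => ?_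
  rw [← norm_mul, ← Ccoef_mul_pow_mul_poch hδ, norm_div, norm_mul, norm_pow, norm_of_nonneg hq.le,
    norm_of_nonneg (poch_pos hα k).le]

lemma mellinSeries_Ccoef_mul_pow {δ : ℝ} (hδ : 0 < δ) (q E β : ℝ) :
    mellinSeries q (fun k => Ccoef δ k * E ^ k) β
      = Gamma ((δ + 1) / 2) / Gamma (δ / 2) ^ 2 * hyp2F1 ((δ + 1) / 2) β (δ / 2) (E / q) := by
  rw [hyp2F1_eq_tsum, ← tsum_mul_left]
  exact tsum_congr fun k => Ccoef_mul_pow_mul_poch hδ q E β k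

end BesselCoefficients

section GreenKernel

/-- The solution `x ^ α * (1 - x) ^ (1 - α)` of the Euler-type equation
`y'' = α (α - 1) y / (x (1 - x))²` on `(0, 1)`. -/
noncomputable def eulerMode (α x : ℝ) : ℝ := x ^ α * (1 - x) ^ (1 - α)

/-- The derivative of `eulerMode α` on `(0, 1)`. -/
noncomputable def eulerModeDeriv (α x : ℝ) : ℝ := (α - x) / (x * (1 - x)) * eulerMode α x

/-- The potential `(κ² - 1/4) / (x (1 - x))²`, for which `eulerMode (1/2 ± κ)` solve
`y'' = eulerPotential κ * y`. -/
noncomputable def eulerPotential (κ x : ℝ) : ℝ := (κ ^ 2 - 1 / 4) / (x * (1 - x)) ^ 2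

/-- The Wronskian `h' y - h y'` of a function `h`, with derivative `h'`, and `y = eulerMode α`. -/
noncomputable def eulerWronskian (α : ℝ) (h h' : ℝ → ℝ) (x : ℝ) : ℝ :=
  h' x * eulerMode α x - h x * eulerModeDeriv α x

/-- The Green kernel of `y'' = eulerPotential κ * y` on `(0, 1)`, normalised so that its derivative
jumps by `-2 κ` across the diagonal. -/
noncomputable def greenKernel (κ s r : ℝ) : ℝ :=
  eulerMode (1 / 2 + κ) (min s r) * eulerMode (1 / 2 - κ) (max s r)

variable {α κ s r p q x : ℝ} {h h' h'' f : ℝ → ℝ}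

lemma eulerMode_pos (hx : x ∈ Set.Ioo (0 : ℝ) 1) : 0 < eulerMode α x :=
  mul_pos (rpow_pos_of_pos hx.1 _) (rpow_pos_of_pos (sub_pos.2 hx.2) _)

lemma eulerMode_one_sub (α x : ℝ) : eulerMode α (1 - x) = eulerMode (1 - α) x := by
  rw [eulerMode, eulerMode, sub_sub_cancel, sub_sub_cancel, mul_comm]

lemma eulerMode_add_mul_eulerMode_sub (hx : x ∈ Set.Ioo (0 : ℝ) 1) :
    eulerMode (1 / 2 + κ) x * eulerMode (1 / 2 - κ) x = x * (1 - x) := by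
  have x_pow : x ^ (1 / 2 + κ) * x ^ (1 / 2 - κ) = x := by
    rw [← rpow_add hx.1, show 1 / 2 + κ + (1 / 2 - κ) = 1 by ring, rpow_one]
  have one_sub_pow : (1 - x) ^ (1 - (1 / 2 + κ)) * (1 - x) ^ (1 - (1 / 2 - κ)) = 1 - x := by
    rw [← rpow_add (sub_pos.2 hx.2),
      show 1 - (1 / 2 + κ) + (1 - (1 / 2 - κ)) = 1 by ring, rpow_one]
  rw [eulerMode, eulerMode, mul_mul_mul_comm, x_pow, one_sub_pow]

lemma hasDerivAt_eulerMode (hx : x ∈ Set.Ioo (0 : ℝ) 1) :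
    HasDerivAt (eulerMode α) (eulerModeDeriv α x) x := by
  have x_pos : 0 < x := hx.1
  have one_sub_pos : 0 < 1 - x := sub_pos.2 hx.2
  refine (((hasDerivAt_id x).rpow_const (p := α) (.inl x_pos.ne')).fun_mul
    (((hasDerivAt_id x).const_sub 1).rpow_const (p := 1 - α)
      (.inl one_sub_pos.ne'))).congr_deriv ?_
  simp only [id, rpow_sub_one x_pos.ne', rpow_sub_one one_sub_pos.ne', eulerModeDeriv, eulerMode]
  field_simp
  ring

lemma hasDerivAt_eulerModeDeriv (hx : x ∈ Set.Ioo (0 : ℝ) 1) :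
    HasDerivAt (eulerModeDeriv α) (eulerPotential (α - 1 / 2) x * eulerMode α x) x := by
  have x_pos : 0 < x := hx.1
  have one_sub_pos : 0 < 1 - x := sub_pos.2 hx.2
  refine ((((hasDerivAt_id x).const_sub α).fun_div
    ((hasDerivAt_id x).fun_mul ((hasDerivAt_id x).const_sub 1))
    (mul_pos x_pos one_sub_pos).ne').fun_mul (hasDerivAt_eulerMode hx)).congr_deriv ?_
  simp only [id, eulerModeDeriv, eulerPotential]
  field_simp
  ring

lemma continuousOn_eulerMode : ContinuousOn (eulerMode α) (Set.Ioo 0 1) :=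
  fun _ hx => (hasDerivAt_eulerMode hx).continuousAt.continuousWithinAt

lemma continuousOn_eulerPotential : ContinuousOn (eulerPotential κ) (Set.Ioo 0 1) :=
  continuousOn_const.div (by fun_prop)
    fun _ hx => pow_ne_zero 2 (mul_pos hx.1 (sub_pos.2 hx.2)).ne'

lemma eulerPotential_neg (κ x : ℝ) : eulerPotential (-κ) x = eulerPotential κ x := by
  rw [eulerPotential, neg_sq, eulerPotential]

lemma eulerPotential_one_sub (κ x : ℝ) : eulerPotential κ (1 - x) = eulerPotential κ x := by
  rw [eulerPotential, eulerPotential, sub_sub_cancel, mul_comm x]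

lemma eulerPotential_nonneg (hκ : 1 / 2 ≤ κ) (x : ℝ) : 0 ≤ eulerPotential κ x :=
  div_nonneg (by nlinarith) (sq_nonneg _)

lemma greenKernel_comm (κ s r : ℝ) : greenKernel κ s r = greenKernel κ r s := by
  rw [greenKernel, greenKernel, min_comm, max_comm]

lemma greenKernel_one_sub (κ s r : ℝ) : greenKernel κ (1 - s) (1 - r) = greenKernel κ s r := by
  rw [greenKernel, greenKernel, min_sub_sub_left, max_sub_sub_left, eulerMode_one_sub,
    eulerMode_one_sub, mul_comm]
  congr 2 <;> ring

lemma continuousOn_greenKernel (hs : s ∈ Set.Ioo (0 : ℝ) 1) :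
    ContinuousOn (greenKernel κ s) (Set.Ioo 0 1) := by
  have min_mem : Set.MapsTo (min s) (Set.Ioo 0 1) (Set.Ioo 0 1) :=
    fun _ hr => ⟨lt_min hs.1 hr.1, min_lt_of_left_lt hs.2⟩
  have max_mem : Set.MapsTo (max s) (Set.Ioo 0 1) (Set.Ioo 0 1) :=
    fun _ hr => ⟨lt_max_of_lt_left hs.1, max_lt hs.2 hr.2⟩
  exact (continuousOn_eulerMode.comp (by fun_prop) min_mem).mul
    (continuousOn_eulerMode.comp (by fun_prop) max_mem)

lemma integral_mul_greenKernel (hp : 0 < p) (hps : p ≤ s) (hsq : s ≤ q) (hq : q < 1)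
    (hf : ContinuousOn f (Set.Icc p q)) :
    ∫ r in p..q, f r * greenKernel κ s r
      = eulerMode (1 / 2 - κ) s * (∫ r in p..s, f r * eulerMode (1 / 2 + κ) r)
        + eulerMode (1 / 2 + κ) s * ∫ r in s..q, f r * eulerMode (1 / 2 - κ) r := by
  have continuousOn_integrand : ContinuousOn (fun r => f r * greenKernel κ s r) (Set.Icc p q) :=
    hf.mul ((continuousOn_greenKernel ⟨hp.trans_le hps, hsq.trans_lt hq⟩).mono
      (Set.Icc_subset_Ioo hp hq))
  have left_part : ∫ r in p..s, f r * greenKernel κ s r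
      = eulerMode (1 / 2 - κ) s * ∫ r in p..s, f r * eulerMode (1 / 2 + κ) r := by
    rw [← intervalIntegral.integral_const_mul]
    refine intervalIntegral.integral_congr fun r hr => ?_
    rw [Set.uIcc_of_le hps] at hr
    simp only [greenKernel, min_eq_right hr.2, max_eq_left hr.2]
    ring
  have right_part : ∫ r in s..q, f r * greenKernel κ s r
      = eulerMode (1 / 2 + κ) s * ∫ r in s..q, f r * eulerMode (1 / 2 - κ) r := by
    rw [← intervalIntegral.integral_const_mul]
    refine intervalIntegral.integral_congr fun r hr => ?_
    rw [Set.uIcc_of_le hsq] at hr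
    simp only [greenKernel, min_eq_left hr.1, max_eq_right hr.1]
    ring
  rw [← left_part, ← right_part]
  exact (intervalIntegral.integral_add_adjacent_intervals
    ((continuousOn_integrand.mono (Set.Icc_subset_Icc_right hsq)).intervalIntegrable_of_Icc hps)
    ((continuousOn_integrand.mono (Set.Icc_subset_Icc_left hps)).intervalIntegrable_of_Icc
      hsq)).symm

section LagrangeIdentity

variable (hh : ∀ x, HasDerivAt h (h' x) x) (hh' : ∀ x, HasDerivAt h' (h'' x) x)
  (hh'' : Continuous h'')

include hh hh'

lemma hasDerivAt_eulerWronskian (hx : x ∈ Set.Ioo (0 : ℝ) 1) :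
    HasDerivAt (eulerWronskian α h h')
      (h'' x * eulerMode α x - h x * eulerPotential (α - 1 / 2) x * eulerMode α x) x :=
  (((hh' x).fun_mul (hasDerivAt_eulerMode hx)).fun_sub
    ((hh x).fun_mul (hasDerivAt_eulerModeDeriv hx))).congr_deriv (by ring)

include hh''

lemma integral_deriv2_mul_eulerMode (hp : 0 < p) (hpq : p ≤ q) (hq : q < 1) :
    ∫ x in p..q, h'' x * eulerMode α x
      = eulerWronskian α h h' q - eulerWronskian α h h' p
        + ∫ x in p..q, h x * eulerPotential (α - 1 / 2) x * eulerMode α x := by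
  have Icc_subset : Set.Icc p q ⊆ Set.Ioo 0 1 := Set.Icc_subset_Ioo hp hq
  have continuous_h : Continuous h := continuous_iff_continuousAt.2 fun x => (hh x).continuousAt
  have integrable_left : IntervalIntegrable (fun x => h'' x * eulerMode α x) volume p q :=
    ((hh''.continuousOn.mul continuousOn_eulerMode).mono Icc_subset).intervalIntegrable_of_Icc hpq
  have integrable_right : IntervalIntegrable
      (fun x => h x * eulerPotential (α - 1 / 2) x * eulerMode α x) volume p q :=
    (((continuous_h.continuousOn.mul continuousOn_eulerPotential).mul
      continuousOn_eulerMode).mono Icc_subset).intervalIntegrable_of_Icc hpq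
  rw [← sub_eq_iff_eq_add, ← intervalIntegral.integral_sub integrable_left integrable_right]
  refine intervalIntegral.integral_eq_sub_of_hasDerivAt (fun x hx => ?_)
    (integrable_left.sub integrable_right)
  rw [Set.uIcc_of_le hpq] at hx
  exact hasDerivAt_eulerWronskian hh hh' (Icc_subset hx)

lemma integral_deriv2_mul_greenKernel (hp : 0 < p) (hps : p ≤ s) (hsq : s ≤ q) (hq : q < 1) :
    ∫ r in p..q, h'' r * greenKernel κ s r
      = -(2 * κ) * h s
        + eulerMode (1 / 2 + κ) s * eulerWronskian (1 / 2 - κ) h h' q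
        - eulerMode (1 / 2 - κ) s * eulerWronskian (1 / 2 + κ) h h' p
        + ∫ r in p..q, h r * eulerPotential κ r * greenKernel κ s r := by
  have hs : s ∈ Set.Ioo (0 : ℝ) 1 := ⟨hp.trans_le hps, hsq.trans_lt hq⟩
  have continuous_h : Continuous h := continuous_iff_continuousAt.2 fun x => (hh x).continuousAt
  have continuousOn_mul_potential :
      ContinuousOn (fun r => h r * eulerPotential κ r) (Set.Icc p q) :=
    (continuous_h.continuousOn.mul continuousOn_eulerPotential).mono (Set.Icc_subset_Ioo hp hq)
  have left_identity := integral_deriv2_mul_eulerMode (α := 1 / 2 + κ) hh hh' hh'' hp hps hs.2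
  have right_identity := integral_deriv2_mul_eulerMode (α := 1 / 2 - κ) hh hh' hh'' hs.1 hsq hq
  have jump : eulerMode (1 / 2 - κ) s * eulerWronskian (1 / 2 + κ) h h' s
      - eulerMode (1 / 2 + κ) s * eulerWronskian (1 / 2 - κ) h h' s = -(2 * κ) * h s := by
    have mul_one_sub_ne : s * (1 - s) ≠ 0 := (mul_pos hs.1 (sub_pos.2 hs.2)).ne'
    have product := eulerMode_add_mul_eulerMode_sub (κ := κ) hs
    simp only [eulerWronskian, eulerModeDeriv]
    linear_combination (-(2 * κ) * h s / (s * (1 - s))) * product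
      + (-(2 * κ) * h s) * div_self mul_one_sub_ne
  rw [integral_mul_greenKernel hp hps hsq hq hh''.continuousOn,
    integral_mul_greenKernel hp hps hsq hq continuousOn_mul_potential, left_identity,
    right_identity, add_sub_cancel_left, sub_sub_cancel_left]
  simp only [eulerPotential_neg]
  linear_combination jump

end LagrangeIdentity

lemma integral_eulerPotential_mul_greenKernel_le (hκ : 1 / 2 ≤ κ) (hp : 0 < p) (hps : p ≤ s)
    (hsq : s ≤ q) (hq : q < 1) :
    ∫ r in p..q, eulerPotential κ r * greenKernel κ s r ≤ 2 * κ := by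
  have identity := integral_deriv2_mul_greenKernel (κ := κ) (h := 1) (h' := 0) (h'' := 0)
    (fun x => hasDerivAt_const x 1) (fun x => hasDerivAt_const x 0) continuous_const hp hps hsq hq
  have hs : s ∈ Set.Ioo (0 : ℝ) 1 := ⟨hp.trans_le hps, hsq.trans_lt hq⟩
  have deriv_left_nonneg : 0 ≤ eulerModeDeriv (1 / 2 + κ) p :=
    mul_nonneg (div_nonneg (by linarith) (mul_pos hp (by linarith)).le)
      (eulerMode_pos ⟨hp, by linarith⟩).le
  have deriv_right_nonpos : eulerModeDeriv (1 / 2 - κ) q ≤ 0 :=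
    mul_nonpos_of_nonpos_of_nonneg
      (div_nonpos_of_nonpos_of_nonneg (by linarith) (mul_pos (by linarith) (by linarith)).le)
      (eulerMode_pos ⟨by linarith, hq⟩).le
  simp only [eulerWronskian, Pi.zero_apply, Pi.one_apply, zero_mul, one_mul, mul_one, zero_sub,
    intervalIntegral.integral_zero] at identity
  nlinarith [mul_nonneg (eulerMode_pos (α := 1 / 2 - κ) hs).le deriv_left_nonneg,
    mul_nonpos_of_nonneg_of_nonpos (eulerMode_pos (α := 1 / 2 + κ) hs).le deriv_right_nonpos]

end GreenKernel

section CrossRatio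

/-- The cross ratio of `s, r, 0, 1`, written `z(s, r)` in the kernel `G_δ`. -/
noncomputable def crossRatio (s r : ℝ) : ℝ := s * (1 - r) / (r * (1 - s))

variable {κ s r : ℝ}

lemma crossRatio_pos (hs : s ∈ Set.Ioo (0 : ℝ) 1) (hr : r ∈ Set.Ioo (0 : ℝ) 1) :
    0 < crossRatio s r :=
  div_pos (mul_pos hs.1 (sub_pos.2 hr.2)) (mul_pos hr.1 (sub_pos.2 hs.2))

lemma one_sub_crossRatio (hs : s < 1) (hr : 0 < r) :
    1 - crossRatio s r = (r - s) / (r * (1 - s)) := by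
  have one_sub_pos : 0 < 1 - s := sub_pos.2 hs
  rw [crossRatio]
  field_simp
  ring

lemma crossRatio_le_one (hs : s < 1) (hr : 0 < r) (hsr : s ≤ r) : crossRatio s r ≤ 1 := by
  rw [← sub_nonneg, one_sub_crossRatio hs hr]
  exact div_nonneg (sub_nonneg.2 hsr) (mul_pos hr (sub_pos.2 hs)).le

lemma abs_crossRatio_lt_one (hs : 0 < s) (hr : r < 1) (hsr : s < r) : |crossRatio s r| < 1 := by
  rw [abs_of_pos (crossRatio_pos ⟨hs, hsr.trans hr⟩ ⟨hs.trans hsr, hr⟩), ← sub_pos,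
    one_sub_crossRatio (hsr.trans hr) (hs.trans hsr)]
  exact div_pos (sub_pos.2 hsr) (mul_pos (hs.trans hsr) (sub_pos.2 (hsr.trans hr)))

lemma greenKernel_eq_crossRatio_rpow (hs : 0 < s) (hr : r < 1) (hsr : s ≤ r) :
    greenKernel κ s r = √(s * (1 - s)) * √(r * (1 - r)) * crossRatio s r ^ κ := by
  have r_pos : 0 < r := hs.trans_le hsr
  have one_sub_s_pos : 0 < 1 - s := by linarith
  have one_sub_r_pos : 0 < 1 - r := by linarith
  rw [greenKernel, min_eq_left hsr, max_eq_right hsr, eulerMode, eulerMode, crossRatio,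
    show 1 - (1 / 2 + κ) = 1 / 2 - κ by ring, show 1 - (1 / 2 - κ) = 1 / 2 + κ by ring,
    div_rpow (by positivity) (by positivity), mul_rpow hs.le one_sub_r_pos.le,
    mul_rpow r_pos.le one_sub_s_pos.le, sqrt_mul hs.le, sqrt_mul r_pos.le]
  simp only [sqrt_eq_rpow, rpow_add hs, rpow_add one_sub_r_pos, rpow_sub r_pos,
    rpow_sub one_sub_s_pos]
  ring

lemma greenKernel_pos (hs : s ∈ Set.Ioo (0 : ℝ) 1) (hr : r ∈ Set.Ioo (0 : ℝ) 1) :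
    0 < greenKernel κ s r :=
  mul_pos (eulerMode_pos ⟨lt_min hs.1 hr.1, min_lt_of_left_lt hs.2⟩)
    (eulerMode_pos ⟨lt_max_of_lt_left hs.1, max_lt hs.2 hr.2⟩)

lemma greenKernel_le_one (hκ : 0 ≤ κ) (hs : s ∈ Set.Ioo (0 : ℝ) 1) (hr : r ∈ Set.Ioo (0 : ℝ) 1) :
    greenKernel κ s r ≤ 1 := by
  wlog hsr : s ≤ r generalizing s r
  · rw [greenKernel_comm]
    exact this hr hs (le_of_not_ge hsr)
  have sqrt_le_one {x : ℝ} (hx : x ∈ Set.Ioo (0 : ℝ) 1) : √(x * (1 - x)) ≤ 1 :=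
    Real.sqrt_le_one.2 (by nlinarith [hx.1, hx.2])
  have crossRatio_nonneg := (crossRatio_pos hs hr).le
  rw [greenKernel_eq_crossRatio_rpow hs.1 hr.2 hsr]
  exact mul_le_one₀ (mul_le_one₀ (sqrt_le_one hs) (sqrt_nonneg _) (sqrt_le_one hr))
    (rpow_nonneg crossRatio_nonneg _)
    (rpow_le_one crossRatio_nonneg (crossRatio_le_one hs.2 hr.1 hsr) hκ)

end CrossRatio

section GreenSeries

lemma hasSum_intervalIntegral_of_summable_integral_norm {F : ℕ → ℝ → ℝ} {p q : ℝ} (hpq : p ≤ q)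
    (hF : ∀ k, IntervalIntegrable (F k) volume p q)
    (hF' : Summable fun k => ∫ x in p..q, ‖F k x‖) :
    HasSum (fun k => ∫ x in p..q, F k x) (∫ x in p..q, ∑' k, F k x) := by
  simp only [intervalIntegral.integral_of_le hpq,
    intervalIntegrable_iff_integrableOn_Ioc_of_le hpq] at hF hF' ⊢
  exact hasSum_integral_of_summable_integral_norm hF hF'

lemma summable_of_summable_natCast_mul {t : ℕ → ℝ} (ht : Summable fun k : ℕ => k * t k) :
    Summable t := by
  refine Summable.of_norm_bounded_eventually_nat ht.norm ?_
  filter_upwards [eventually_ge_atTop 1] with k hk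
  rw [norm_mul, RCLike.norm_natCast]
  exact le_mul_of_one_le_left (norm_nonneg _) (Nat.one_le_cast.2 hk)

variable {s p q : ℝ} {t : ℕ → ℝ} {h h' h'' f : ℝ → ℝ}
  (hp : 0 < p) (hps : p ≤ s) (hsq : s ≤ q) (hq : q < 1) (hf : ContinuousOn f (Set.Icc p q))
  (ht : Summable fun k : ℕ => k * t k)

include hp hps hsq hq hf

lemma integral_norm_mul_eulerPotential_mul_greenKernel_le {κ M : ℝ} (hκ : 1 / 2 ≤ κ)
    (hM : ∀ r ∈ Set.Icc p q, ‖f r‖ ≤ M) :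
    ∫ r in p..q, ‖f r * eulerPotential κ r * greenKernel κ s r‖ ≤ 2 * M * κ := by
  have hs : s ∈ Set.Ioo (0 : ℝ) 1 := ⟨hp.trans_le hps, hsq.trans_lt hq⟩
  have Icc_subset : Set.Icc p q ⊆ Set.Ioo 0 1 := Set.Icc_subset_Ioo hp hq
  have continuousOn_kernel :
      ContinuousOn (fun r => eulerPotential κ r * greenKernel κ s r) (Set.Icc p q) :=
    (continuousOn_eulerPotential.mul (continuousOn_greenKernel hs)).mono Icc_subset
  have M_nonneg : 0 ≤ M := (norm_nonneg _).trans (hM s ⟨hps, hsq⟩)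
  simp only [mul_assoc (f _)]
  calc ∫ r in p..q, ‖f r * (eulerPotential κ r * greenKernel κ s r)‖
      ≤ ∫ r in p..q, M * (eulerPotential κ r * greenKernel κ s r) := by
        refine intervalIntegral.integral_mono_on (hps.trans hsq)
          ((hf.mul continuousOn_kernel).norm.intervalIntegrable_of_Icc (hps.trans hsq))
          ((continuousOn_const.mul continuousOn_kernel).intervalIntegrable_of_Icc
            (hps.trans hsq)) fun r hr => ?_
        have kernel_nonneg : 0 ≤ eulerPotential κ r * greenKernel κ s r :=
          mul_nonneg (eulerPotential_nonneg hκ r) (greenKernel_pos hs (Icc_subset hr)).le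
        rw [norm_mul, norm_of_nonneg kernel_nonneg]
        exact mul_le_mul_of_nonneg_right (hM r hr) kernel_nonneg
    _ ≤ M * (2 * κ) := by
        rw [intervalIntegral.integral_const_mul]
        gcongr
        exact integral_eulerPotential_mul_greenKernel_le hκ hp hps hsq hq
    _ = 2 * M * κ := by ring

include ht

lemma hasSum_integral_mul_greenKernel :
    HasSum (fun k : ℕ => t k * ∫ r in p..q, f r * greenKernel k s r)
      (∫ r in p..q, f r * ∑' k : ℕ, t k * greenKernel k s r) := by
  have hs : s ∈ Set.Ioo (0 : ℝ) 1 := ⟨hp.trans_le hps, hsq.trans_lt hq⟩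
  have Icc_subset : Set.Icc p q ⊆ Set.Ioo 0 1 := Set.Icc_subset_Ioo hp hq
  obtain ⟨M, hM⟩ := isCompact_Icc.exists_bound_of_continuousOn hf
  simp only [← tsum_mul_left, ← intervalIntegral.integral_const_mul, mul_left_comm (f _)]
  refine hasSum_intervalIntegral_of_summable_integral_norm (hps.trans hsq) (fun k => ?_) ?_
  · exact (continuousOn_const.mul (hf.mul ((continuousOn_greenKernel hs).mono
      Icc_subset))).intervalIntegrable_of_Icc (hps.trans hsq)
  refine Summable.of_norm_bounded
    (((summable_of_summable_natCast_mul ht).norm.mul_right M).mul_right |q - p|) fun k => ?_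
  refine intervalIntegral.norm_integral_le_of_norm_le_const fun r hr => ?_
  rw [Set.uIoc_of_le (hps.trans hsq)] at hr
  have hr : r ∈ Set.Icc p q := Set.Ioc_subset_Icc_self hr
  have kernel_nonneg := (greenKernel_pos (κ := k) hs (Icc_subset hr)).le
  rw [norm_norm, norm_mul, norm_mul, norm_of_nonneg kernel_nonneg]
  gcongr
  exact (mul_le_mul (hM r hr) (greenKernel_le_one k.cast_nonneg hs (Icc_subset hr))
    kernel_nonneg ((norm_nonneg _).trans (hM r hr))).trans_eq (mul_one M)

lemma hasSum_integral_mul_eulerPotential_mul_greenKernel :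
    HasSum (fun k : ℕ => t k * ∫ r in p..q, f r * eulerPotential k r * greenKernel k s r)
      (∫ r in p..q, f r * ∑' k : ℕ, t k * (eulerPotential k r * greenKernel k s r)) := by
  have hs : s ∈ Set.Ioo (0 : ℝ) 1 := ⟨hp.trans_le hps, hsq.trans_lt hq⟩
  obtain ⟨M, hM⟩ := isCompact_Icc.exists_bound_of_continuousOn hf
  simp only [← tsum_mul_left, ← intervalIntegral.integral_const_mul, mul_left_comm (f _) (t _),
    ← mul_assoc (f _)]
  refine hasSum_intervalIntegral_of_summable_integral_norm (hps.trans hsq) (fun k => ?_) ?_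
  · exact (continuousOn_const.mul ((hf.mul (continuousOn_eulerPotential.mono
      (Set.Icc_subset_Ioo hp hq))).mul ((continuousOn_greenKernel hs).mono
      (Set.Icc_subset_Ioo hp hq)))).intervalIntegrable_of_Icc (hps.trans hsq)
  -- The potential is nonnegative only for `κ ≥ 1/2`, so the term `k = 0` is discarded.
  refine Summable.of_norm_bounded_eventually_nat (ht.norm.mul_left (2 * M)) ?_
  filter_upwards [eventually_ge_atTop 1] with k hk
  have half_le : (1 / 2 : ℝ) ≤ k := by linarith [(Nat.one_le_cast (α := ℝ)).2 hk]
  simp only [norm_mul (t k), intervalIntegral.integral_const_mul]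
  rw [norm_mul, norm_norm, norm_of_nonneg
    (intervalIntegral.integral_nonneg (hps.trans hsq) fun _ _ => norm_nonneg _)]
  calc ‖t k‖ * ∫ r in p..q, ‖f r * eulerPotential k r * greenKernel k s r‖
      ≤ ‖t k‖ * (2 * M * k) := by
        gcongr
        exact integral_norm_mul_eulerPotential_mul_greenKernel_le hp hps hsq hq hf half_le hM
    _ = 2 * M * ‖k * t k‖ := by
        rw [norm_mul, RCLike.norm_natCast]
        ring

omit hf

lemma integral_deriv2_mul_tsum_greenKernel
    (hh : ∀ x, HasDerivAt h (h' x) x) (hh' : ∀ x, HasDerivAt h' (h'' x) x)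
    (hh'' : Continuous h'') (h_p : h p = 0) (h'_p : h' p = 0) (h_q : h q = 0) (h'_q : h' q = 0) :
    ∫ r in p..q, h'' r * ∑' k : ℕ, t k * greenKernel k s r
      = -(2 * ∑' k : ℕ, k * t k) * h s
        + ∫ r in p..q, h r * ∑' k : ℕ, t k * (eulerPotential k r * greenKernel k s r) := by
  have continuous_h : Continuous h := continuous_iff_continuousAt.2 fun x => (hh x).continuousAt
  have green_identity (k : ℕ) : t k * ∫ r in p..q, h'' r * greenKernel k s r
      = -2 * h s * (k * t k) + t k * ∫ r in p..q, h r * eulerPotential k r * greenKernel k s r := by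
    rw [integral_deriv2_mul_greenKernel hh hh' hh'' hp hps hsq hq]
    simp only [eulerWronskian, h_p, h'_p, h_q, h'_q]
    ring
  have hasSum_left := hasSum_integral_mul_greenKernel hp hps hsq hq hh''.continuousOn ht
  simp only [green_identity] at hasSum_left
  have hasSum_right :=
    hasSum_integral_mul_eulerPotential_mul_greenKernel hp hps hsq hq continuous_h.continuousOn ht
  rw [hasSum_left.unique ((ht.hasSum.mul_left (-2 * h s)).add hasSum_right)]
  ring

end GreenSeries

section BesselBridge

/-- The coefficients of the expansion of `twoPt δ` over the Green kernels
`greenKernel 0, greenKernel 1, …`. -/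
noncomputable def bridgeCoeff (δ : ℝ) (k : ℕ) : ℝ := hypCoeff (-(1 / 2)) (-(1 / 2)) (δ / 2) k

variable {δ s r : ℝ}

lemma hasSum_natCast_mul_bridgeCoeff (hδ : 0 < δ) :
    HasSum (fun k : ℕ => k * bridgeCoeff δ k)
      (Gamma (δ / 2) ^ 2 / (4 * Gamma ((δ + 1) / 2) ^ 2)) := by
  have gauss := hasSum_natCast_mul_hypCoeff (a := -(1 / 2)) (b := -(1 / 2)) (c := δ / 2)
    (by norm_num) (by norm_num) (half_pos hδ) (by linarith)
  rw [show δ / 2 - -(1 / 2) - -(1 / 2) - 1 = δ / 2 by ring,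
    show δ / 2 - -(1 / 2) = (δ + 1) / 2 by ring] at gauss
  rwa [show Gamma (δ / 2) ^ 2 / (4 * Gamma ((δ + 1) / 2) ^ 2) = -(1 / 2) * -(1 / 2) *
    (Gamma (δ / 2) * Gamma (δ / 2)) / (Gamma ((δ + 1) / 2) * Gamma ((δ + 1) / 2)) by ring]

lemma Kcoef_mul_tsum_natCast_mul_bridgeCoeff (hδ : 0 < δ) :
    Kcoef δ * (2 * ∑' k : ℕ, k * bridgeCoeff δ k) = 1 := by
  have := (Gamma_pos_of_pos (half_pos hδ)).ne'
  have := (Gamma_pos_of_pos (show 0 < (δ + 1) / 2 by linarith)).ne'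
  rw [(hasSum_natCast_mul_bridgeCoeff hδ).tsum_eq, Kcoef]
  field_simp
  norm_num

lemma tsum_bridgeCoeff_mul_greenKernel (hs : 0 < s) (hsr : s < r) (hr : r < 1) :
    ∑' k : ℕ, bridgeCoeff δ k * greenKernel k s r
      = √(s * (1 - s)) * √(r * (1 - r)) *
        hyp2F1 (-(1 / 2)) (-(1 / 2)) (δ / 2) (crossRatio s r) := by
  rw [hyp2F1_eq_tsum, ← tsum_mul_left]
  refine tsum_congr fun k => ?_
  rw [greenKernel_eq_crossRatio_rpow hs hr hsr.le, rpow_natCast, bridgeCoeff]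
  ring

lemma tsum_bridgeCoeff_mul_eulerPotential_mul_greenKernel (hs : 0 < s) (hsr : s < r) (hr : r < 1) :
    ∑' k : ℕ, bridgeCoeff δ k * (eulerPotential k r * greenKernel k s r)
      = -(1 / 4) * (√(s * (1 - s)) * √(r * (1 - r)) / (r * (1 - r)) ^ 2) *
        hyp2F1 (-(1 / 2)) (3 / 2) (δ / 2) (crossRatio s r) := by
  rw [hyp2F1_eq_tsum, ← tsum_mul_left]
  refine tsum_congr fun k => ?_
  have shift := poch_mul_add_mul_add_one (-(1 / 2)) k
  rw [show (-(1 / 2) + 2 : ℝ) = 3 / 2 by norm_num] at shift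
  rw [greenKernel_eq_crossRatio_rpow hs hr hsr.le, rpow_natCast, bridgeCoeff, eulerPotential,
    hypCoeff, hypCoeff]
  linear_combination (√(s * (1 - s)) * √(r * (1 - r)) / (r * (1 - r)) ^ 2 * crossRatio s r ^ k *
    poch (-(1 / 2)) k / (k.factorial * poch (δ / 2) k)) * shift

lemma twoPt_comm (δ s r : ℝ) : twoPt δ s r = twoPt δ r s := by
  rcases lt_trichotomy s r with hsr | rfl | hsr
  · rw [twoPt, twoPt, if_pos hsr, if_neg hsr.not_gt]
  · rfl
  · rw [twoPt, twoPt, if_neg hsr.not_gt, if_pos hsr]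

theorem twoPt_eq_tsum_greenKernel (hδ : 0 < δ) (hs : s ∈ Set.Ioo (0 : ℝ) 1)
    (hr : r ∈ Set.Ioo (0 : ℝ) 1) (hsr : s ≠ r) :
    twoPt δ s r = Kcoef δ * ∑' k : ℕ, bridgeCoeff δ k * greenKernel k s r := by
  wlog hlt : s < r generalizing s r
  · rw [twoPt_comm, this hr hs hsr.symm (hsr.symm.lt_of_le (le_of_not_gt hlt))]
    simp only [greenKernel_comm _ s]
  obtain ⟨hs0, hs1⟩ := hs
  obtain ⟨hr0, hr1⟩ := hr
  have : 0 < 1 - s := sub_pos.2 hs1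
  have : 0 < 1 - r := sub_pos.2 hr1
  have : 0 < r - s := sub_pos.2 hlt
  rw [tsum_bridgeCoeff_mul_greenKernel hs0 hlt hr1, twoPt, if_pos hlt, ← crossRatio,
    hyp2F1_eq_rpow_mul_hyp2F1 _ _ (half_pos hδ) (abs_crossRatio_lt_one hs0 hr1 hlt),
    one_sub_crossRatio hs1 hr0, show δ / 2 - (δ + 1) / 2 = -(1 / 2) by ring,
    show -(1 / 2) - (δ + 1) / 2 = -(δ / 2 + 1) by ring]
  have prefactor : (r - s) ^ (δ / 2 + 1) * (s * (1 - r)) ^ ((1 : ℝ) / 2) *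
      (r * (1 - s)) ^ (-((δ + 1) / 2)) * ((r - s) / (r * (1 - s))) ^ (-(δ / 2 + 1))
        = √(s * (1 - s)) * √(r * (1 - r)) := by
    apply log_injOn_pos (Set.mem_Ioi.2 (by positivity)) (Set.mem_Ioi.2 (by positivity))
    simp (disch := positivity) only [log_mul, log_div, log_rpow, log_sqrt]
    ring
  linear_combination Kcoef δ * hyp2F1 (-(1 / 2)) (-(1 / 2)) (δ / 2) (crossRatio s r) * prefactor

lemma SigmaRS_one_sub (δ : ℝ) (hrs : r < s) : SigmaRS δ (1 - r) (1 - s) = SigmaRS δ r s := by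
  have hlt : 1 - s < 1 - r := by linarith
  funext b
  simp only [SigmaRS, Dcoef, fcoef, if_pos hlt, if_neg hrs.not_gt, sub_sub_cancel,
    sub_sub_sub_cancel_left, mul_comm]

lemma fcoef_of_lt (hs : 0 < s) (hsr : s < r) (k : ℕ) :
    fcoef s r k = √(2 * (r - s)) * √(s / r) * (s / (2 * r * (r - s))) ^ k := by
  have : 0 < r := hs.trans hsr
  have : 0 < r - s := sub_pos.2 hsr
  rw [fcoef, if_pos hsr, rpow_sub (by positivity), rpow_add (by positivity), ← sqrt_eq_rpow,
    ← sqrt_eq_rpow, rpow_natCast, rpow_natCast,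
    show s / (2 * r * (r - s)) = s / r / (2 * (r - s)) by field_simp, div_pow (s / r)]
  ring

lemma SigmaRS_eq_expMulSeries_sq (δ : ℝ) (hs : 0 < s) (hsr : s < r) :
    SigmaRS δ r s = fun b =>
      ((2 : ℝ) ^ (δ / 2 - 1) * (r * (1 - r)) ^ (δ / 2))⁻¹ * (√(2 * (r - s)) * √(s / r)) *
        expMulSeries ((1 - s) / (2 * (r - s) * (1 - r)))
          (fun k => Ccoef δ k * (s / (2 * r * (r - s))) ^ k) (b ^ 2) := by
  funext b
  have series_eq : ∑' k : ℕ, Ccoef δ k * fcoef s r k * b ^ (2 * k)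
      = √(2 * (r - s)) * √(s / r) *
        ∑' k : ℕ, Ccoef δ k * (s / (2 * r * (r - s))) ^ k * (b ^ 2) ^ k := by
    rw [← tsum_mul_left]
    refine tsum_congr fun k => ?_
    rw [fcoef_of_lt hs hsr, pow_mul]
    ring
  rw [SigmaRS, series_eq, Dcoef, if_pos hsr, expMulSeries,
    show -((1 - s) / ((r - s) * (1 - r))) * b ^ 2 / 2
      = -((1 - s) / (2 * (r - s) * (1 - r))) * b ^ 2 by field_simp]
  ring

lemma SigmaRS_prefactor (c : ℝ) (hs : s ∈ Set.Ioo (0 : ℝ) 1) (hr : r ∈ Set.Ioo (0 : ℝ) 1)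
    (hsr : s < r) :
    ((2 : ℝ) ^ (c - 1) * (r * (1 - r)) ^ c)⁻¹ * (√(2 * (r - s)) * √(s / r)) *
        ((1 - s) / (2 * (r - s) * (1 - r))) ^ (3 / 2 - c)
      = √(s * (1 - s)) * √(r * (1 - r)) / (r * (1 - r)) ^ 2 * (1 - crossRatio s r) ^ (c - 1) := by
  obtain ⟨hs0, hs1⟩ := hs
  obtain ⟨hr0, hr1⟩ := hr
  have : 0 < 1 - s := sub_pos.2 hs1
  have : 0 < 1 - r := sub_pos.2 hr1
  have : 0 < r - s := sub_pos.2 hsr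
  rw [one_sub_crossRatio hs1 hr0]
  apply log_injOn_pos (Set.mem_Ioi.2 (by positivity)) (Set.mem_Ioi.2 (by positivity))
  simp (disch := positivity) only [log_mul, log_div, log_inv, log_rpow, log_pow, log_sqrt]
  push_cast
  ring

lemma iterate_deriv_const_mul (n : ℕ) (C : ℝ) (f : ℝ → ℝ) :
    deriv^[n] (fun x => C * f x) = fun x => C * deriv^[n] f x := by
  simp only [← iteratedDeriv_eq_iterate]
  exact funext fun x => iteratedDeriv_const_mul_field C f

lemma integral_rpow_mul_iterate_three_deriv_SigmaRS_of_lt (hδ : 0 < δ)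
    (hs : s ∈ Set.Ioo (0 : ℝ) 1) (hr : r ∈ Set.Ioo (0 : ℝ) 1) (hsr : s < r) :
    ∫ b in Set.Ioi (0 : ℝ), b ^ (δ - 1) * deriv^[3] (SigmaRS δ r s) b
      = (2 - δ) * Kcoef δ * (√(s * (1 - s)) * √(r * (1 - r)) / (r * (1 - r)) ^ 2) *
        ((1 - crossRatio s r) ^ (δ / 2 - 1) *
          hyp2F1 ((δ + 1) / 2) ((δ + 1) / 2 - 2) (δ / 2) (crossRatio s r)) := by
  have : 0 < 1 - s := sub_pos.2 hs.2
  have : 0 < 1 - r := sub_pos.2 hr.2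
  have : 0 < r - s := sub_pos.2 hsr
  have q_pos : 0 < (1 - s) / (2 * (r - s) * (1 - r)) := by positivity
  have ratio_eq : s / (2 * r * (r - s)) / ((1 - s) / (2 * (r - s) * (1 - r))) = crossRatio s r := by
    rw [crossRatio]
    field_simp
  have moment := (mellinSummable_Ccoef_mul_pow hδ q_pos
    (ratio_eq ▸ abs_crossRatio_lt_one hs.1 hr.2 hsr)).integral_iterate_three_deriv_expMulSeries_sq
    (a := (δ + 1) / 2) q_pos (by linarith)
  rw [mellinSeries_Ccoef_mul_pow hδ, ratio_eq, show 2 * ((δ + 1) / 2) - 2 = δ - 1 by ring,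
    show 2 - (δ + 1) / 2 = 3 / 2 - δ / 2 by ring] at moment
  rw [SigmaRS_eq_expMulSeries_sq δ hs.1 hsr, iterate_deriv_const_mul]
  simp only [mul_left_comm _ (_ * _ : ℝ)]
  rw [integral_const_mul, moment, Kcoef]
  linear_combination ((2 - δ) * (2 * Gamma ((δ + 1) / 2) ^ 2 / Gamma (δ / 2) ^ 2) *
    hyp2F1 ((δ + 1) / 2) ((δ + 1) / 2 - 2) (δ / 2) (crossRatio s r)) *
      SigmaRS_prefactor (δ / 2) hs hr hsr

theorem integral_rpow_mul_iterate_three_deriv_SigmaRS (hδ : 0 < δ) (hs : s ∈ Set.Ioo (0 : ℝ) 1)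
    (hr : r ∈ Set.Ioo (0 : ℝ) 1) (hsr : s ≠ r) :
    ∫ b in Set.Ioi (0 : ℝ), b ^ (δ - 1) * deriv^[3] (SigmaRS δ r s) b
      = 4 * (δ - 2) *
        (Kcoef δ * ∑' k : ℕ, bridgeCoeff δ k * (eulerPotential k r * greenKernel k s r)) := by
  wlog hlt : s < r generalizing s r
  · have hrs : r < s := hsr.symm.lt_of_le (le_of_not_gt hlt)
    have reflected := this (s := 1 - s) (r := 1 - r) ⟨sub_pos.2 hs.2, sub_lt_self 1 hs.1⟩
      ⟨sub_pos.2 hr.2, sub_lt_self 1 hr.1⟩ (by simpa using hsr) (by linarith)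
    simpa only [SigmaRS_one_sub δ hrs, eulerPotential_one_sub, greenKernel_one_sub] using reflected
  have euler := hyp2F1_eq_rpow_mul_hyp2F1 (-(1 / 2)) (3 / 2) (half_pos hδ)
    (abs_crossRatio_lt_one hs.1 hr.2 hlt)
  rw [show δ / 2 - -(1 / 2) - 3 / 2 = δ / 2 - 1 by ring,
    show δ / 2 - -(1 / 2) = (δ + 1) / 2 by ring,
    show δ / 2 - 3 / 2 = (δ + 1) / 2 - 2 by ring] at euler
  rw [integral_rpow_mul_iterate_three_deriv_SigmaRS_of_lt hδ hs hr hlt,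
    tsum_bridgeCoeff_mul_eulerPotential_mul_greenKernel hs.1 hlt hr.2, euler]
  ring

end BesselBridge

section Localization

variable {α E : Type*}

lemma exists_Ioo_superset_of_isCompact [LinearOrder α] [DenselyOrdered α] [TopologicalSpace α]
    [ClosedIicTopology α] [ClosedIciTopology α] {K : Set α} {a b : α} (hK : IsCompact K)
    (hne : K.Nonempty) (hsub : K ⊆ Set.Ioo a b) :
    ∃ p q, a < p ∧ q < b ∧ K ⊆ Set.Ioo p q := by
  obtain ⟨m, hm, hmin⟩ := hK.exists_isLeast hne
  obtain ⟨M, hM, hmax⟩ := hK.exists_isGreatest hne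
  obtain ⟨p, hap, hpm⟩ := exists_between (hsub hm).1
  obtain ⟨q, hMq, hqb⟩ := exists_between (hsub hM).2
  exact ⟨p, q, hap, hqb, fun x hx => ⟨hpm.trans_le (hmin hx), (hmax hx).trans_lt hMq⟩⟩

lemma intervalIntegral_eq_of_support_subset [NormedAddCommGroup E] [NormedSpace ℝ E]
    {f : ℝ → E} {a p q b : ℝ} (hap : a ≤ p) (hqb : q ≤ b)
    (hf : Function.support f ⊆ Set.Ioc p q) :
    ∫ x in a..b, f x = ∫ x in p..q, f x := by
  rw [intervalIntegral.integral_eq_integral_of_support_subset hf,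
    intervalIntegral.integral_eq_integral_of_support_subset
      (hf.trans (Set.Ioc_subset_Ioc hap hqb))]

lemma intervalIntegral_congr_of_ne [NormedAddCommGroup E] [NormedSpace ℝ E]
    {f g : ℝ → E} {a b : ℝ} (c : ℝ) (hab : a ≤ b)
    (hfg : ∀ x ∈ Set.Ioo a b, c ≠ x → f x = g x) :
    ∫ x in a..b, f x = ∫ x in a..b, g x := by
  refine intervalIntegral.integral_congr_ae ?_
  filter_upwards [Measure.ae_ne volume b, Measure.ae_ne volume c] with x hb hc hx
  rw [Set.uIoc_of_le hab] at hx
  exact hfg x ⟨hx.1, hx.2.lt_of_ne hb⟩ hc.symm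

end Localization

section DistributionalDerivative

variable {h : ℝ → ℝ} {t : ℕ → ℝ} {s : ℝ}

theorem integral_deriv_deriv_mul_tsum_greenKernel (ht : Summable fun k : ℕ => k * t k)
    (hs : s ∈ Set.Ioo 0 1) (hh : ContDiff ℝ 2 h) (hsupp : tsupport h ⊆ Set.Ioo 0 1) :
    ∫ r in (0 : ℝ)..1, deriv (deriv h) r * ∑' k : ℕ, t k * greenKernel k s r =
      -(2 * ∑' k : ℕ, k * t k) * h s +
        ∫ r in (0 : ℝ)..1, h r * ∑' k : ℕ, t k * (eulerPotential k r * greenKernel k s r) := by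
  have compact : IsCompact (tsupport h) := isCompact_Icc.of_isClosed_subset
    (isClosed_tsupport h) (hsupp.trans Set.Ioo_subset_Icc_self)
  obtain ⟨p, q, hp, hq, hpq⟩ := exists_Ioo_superset_of_isCompact (compact.insert s)
    (Set.insert_nonempty s _) (Set.insert_subset hs hsupp)
  obtain ⟨hs, hsupp⟩ := Set.insert_subset_iff.1 hpq
  have hsupp' : tsupport (deriv h) ⊆ Set.Ioo p q := tsupport_deriv_subset.trans hsupp
  have hsupp'' : tsupport (deriv (deriv h)) ⊆ Set.Ioo p q := tsupport_deriv_subset.trans hsupp'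
  have support_mul {f : ℝ → ℝ} (g : ℝ → ℝ) (hf : tsupport f ⊆ Set.Ioo p q) :
      Function.support (fun r => f r * g r) ⊆ Set.Ioc p q :=
    (Function.support_mul_subset_left f g).trans
      ((subset_tsupport f).trans (hf.trans Set.Ioo_subset_Ioc_self))
  have zero_at {f : ℝ → ℝ} {x : ℝ} (hf : tsupport f ⊆ Set.Ioo p q) (hx : x ∉ Set.Ioo p q) :
      f x = 0 := image_eq_zero_of_notMem_tsupport fun hmem => hx (hf hmem)
  have hh' : ContDiff ℝ 1 (deriv h) := (contDiff_succ_iff_deriv (n := 1)).1 hh |>.2.2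
  rw [intervalIntegral_eq_of_support_subset hp.le hq.le (support_mul _ hsupp''),
    intervalIntegral_eq_of_support_subset hp.le hq.le (support_mul _ hsupp)]
  exact integral_deriv2_mul_tsum_greenKernel hp hs.1.le hs.2.le hq ht
    (fun x => (hh.differentiable (by norm_num) x).hasDerivAt)
    (fun x => (hh'.differentiable (by norm_num) x).hasDerivAt) (hh'.continuous_deriv le_rfl)
    (zero_at hsupp (by simp)) (zero_at hsupp' (by simp))
    (zero_at hsupp (by simp)) (zero_at hsupp' (by simp))

end DistributionalDerivative

theorem twoPt_distributional_second_derivative (δ : ℝ) (hδ : 0 < δ) (hδ2 : δ ≠ 2)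
    (s : ℝ) (hs : s ∈ Set.Ioo (0 : ℝ) 1)
    (h : ℝ → ℝ) (hh : ContDiff ℝ 2 h) (hsupp : tsupport h ⊆ Set.Ioo 0 1) :
    ∫ r in (0:ℝ)..1, deriv (deriv h) r * twoPt δ s r
      = -h s + (1 / (4 * (δ - 2))) *
          ∫ r in (0:ℝ)..1, h r *
            ∫ b in Set.Ioi (0:ℝ), b ^ (δ - 1) * deriv^[3] (SigmaRS δ r s) b := by
  have kernel_part : ∫ r in (0:ℝ)..1, deriv (deriv h) r * twoPt δ s r = Kcoef δ *
      ∫ r in (0:ℝ)..1, deriv (deriv h) r * ∑' k : ℕ, bridgeCoeff δ k * greenKernel k s r := by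
    rw [← intervalIntegral.integral_const_mul]
    refine intervalIntegral_congr_of_ne s zero_le_one fun r hr hsr => ?_
    rw [twoPt_eq_tsum_greenKernel hδ hs hr hsr, mul_left_comm]
  have regular_part : ∫ r in (0:ℝ)..1, h r *
        ∫ b in Set.Ioi (0:ℝ), b ^ (δ - 1) * deriv^[3] (SigmaRS δ r s) b
      = 4 * (δ - 2) * Kcoef δ * ∫ r in (0:ℝ)..1, h r *
        ∑' k : ℕ, bridgeCoeff δ k * (eulerPotential k r * greenKernel k s r) := by
    rw [← intervalIntegral.integral_const_mul]
    refine intervalIntegral_congr_of_ne s zero_le_one fun r hr hsr => ?_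
    rw [integral_rpow_mul_iterate_three_deriv_SigmaRS hδ hs hr hsr]
    ring
  rw [kernel_part, regular_part, integral_deriv_deriv_mul_tsum_greenKernel
    (hasSum_natCast_mul_bridgeCoeff hδ).summable hs hh hsupp]
  have cancel : 1 / (4 * (δ - 2)) * (4 * (δ - 2)) = 1 :=
    one_div_mul_cancel (mul_ne_zero four_ne_zero (sub_ne_zero.2 hδ2))
  rw [← mul_assoc, ← mul_assoc _ _ (Kcoef δ), cancel]
  linear_combination (-h s) * Kcoef_mul_tsum_natCast_mul_bridgeCoeff hδ
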